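/- arXiv:1311.5626 — 6 statements merged into one kernel-verified Lean document; each statement's English description precedes it below -/
import Mathlib

section
/- Let d≥1 and let λ=(λ^{(0)},…,λ^{(d−1)}) be a d-partition of n. Set α:=∑_{i=0}^{d−1} λ^{(i)}_1. Then there exists a partition ν of n with ν_1 = α and iterated Littlewood–Richardson coefficient c^ν_λ > 0. -/
/-- A skew semistandard filling of the skew shape `ν/λ`: a function on cells, positive on the
cells of `ν/λ`, zero elsewhere, with entries weakly increasing along rows and strictly increasing
down columns (rows are indexed by the first coordinate, columns by the second, both 0-based). -/
def IsSkewSS (ν lam : YoungDiagram) (T : ℕ × ℕ → ℕ) : Prop :=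
  lam ≤ ν ∧
  (∀ c ∈ ν.cells \ lam.cells, 1 ≤ T c) ∧
  (∀ c, c ∉ ν.cells \ lam.cells → T c = 0) ∧
  (∀ i j₁ j₂, j₁ ≤ j₂ → (i, j₁) ∈ ν.cells \ lam.cells → (i, j₂) ∈ ν.cells \ lam.cells →
      T (i, j₁) ≤ T (i, j₂)) ∧
  (∀ i₁ i₂ j, i₁ < i₂ → (i₁, j) ∈ ν.cells \ lam.cells → (i₂, j) ∈ ν.cells \ lam.cells →
      T (i₁, j) < T (i₂, j))

/-- A skew semistandard tableau of shape `ν/λ` and weight `μ`: exactly `μ_l` entries equal `l`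
for every `l ≥ 1` (here `μ_l` is `μ.rowLen (l-1)`, rows of `μ` being 0-indexed). -/
def IsSkewSSYT (ν lam μ : YoungDiagram) (T : ℕ × ℕ → ℕ) : Prop :=
  IsSkewSS ν lam T ∧
  ∀ l, 1 ≤ l → ((ν.cells \ lam.cells).filter (fun c => T c = l)).card = μ.rowLen (l - 1)

/-- `rowCount ν lam T k l` is `T^l_k`: the number of entries equal to `l` in row `k`
(1-indexed) of the skew tableau `T` of shape `ν/λ`. -/
def rowCount (ν lam : YoungDiagram) (T : ℕ × ℕ → ℕ) (k l : ℕ) : ℕ :=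
  ((ν.cells \ lam.cells).filter (fun c => c.1 = k - 1 ∧ T c = l)).card

/-- A Littlewood–Richardson tableau of shape `ν/λ` and weight `μ`: a skew semistandard tableau
of shape `ν/λ` and weight `μ` admitting a companion semistandard tableau `T'` of straight shape
`μ`, i.e. `T^l_k = T'^k_l` for all `k, l ≥ 1`. -/
def IsLRTableau (ν lam μ : YoungDiagram) (T : ℕ × ℕ → ℕ) : Prop :=
  IsSkewSSYT ν lam μ T ∧
  ∃ T' : ℕ × ℕ → ℕ, IsSkewSS μ ⊥ T' ∧
    ∀ k l, 1 ≤ k → 1 ≤ l → rowCount ν lam T k l = rowCount μ ⊥ T' l k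

/-- The Littlewood–Richardson coefficient `c^ν_{λ,μ}`: the number of Littlewood–Richardson
tableaux of shape `ν/λ` and weight `μ`. -/
noncomputable def lrCoeff (ν lam μ : YoungDiagram) : ℕ :=
  Nat.card {T : ℕ × ℕ → ℕ // IsLRTableau ν lam μ T}

/-- A witness for the iterated Littlewood–Richardson coefficient `c^ν_λ` of a `d`-partition
`λ = (lam 0, …, lam (d-1))`: a sequence `seq` of partitions with `seq 0 = lam 0`,
`seq (d-1) = ν`, together with, for each `1 ≤ i ≤ d-1`, a Littlewood–Richardson tableau `T i`
of shape `seq i / seq (i-1)` and weight `lam i`.  (The remaining data are normalised to junk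
values so that witnesses are counted exactly once.) -/
def IsIterWitness (d : ℕ) (lam : ℕ → YoungDiagram) (ν : YoungDiagram)
    (seq : ℕ → YoungDiagram) (T : ℕ → ℕ × ℕ → ℕ) : Prop :=
  seq 0 = lam 0 ∧ seq (d - 1) = ν ∧
  (∀ i, 1 ≤ i → i ≤ d - 1 → IsLRTableau (seq i) (seq (i - 1)) (lam i) (T i)) ∧
  (∀ i, d ≤ i → seq i = ⊥) ∧
  (T 0 = fun _ => 0) ∧ (∀ i, d ≤ i → T i = fun _ => 0)

/-- The iterated Littlewood–Richardson coefficient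
`c^ν_λ = ∑ ∏_{i=1}^{d-1} c^{ν⁽ⁱ⁾}_{ν⁽ⁱ⁻¹⁾, λ⁽ⁱ⁾}` (with `ν⁽⁰⁾ = λ⁽⁰⁾`, `ν⁽ᵈ⁻¹⁾ = ν`),
counted as the number of chains of Littlewood–Richardson tableaux. -/
noncomputable def iterLR (d : ℕ) (lam : ℕ → YoungDiagram) (ν : YoungDiagram) : ℕ :=
  Nat.card {w : (ℕ → YoungDiagram) × (ℕ → ℕ × ℕ → ℕ) // IsIterWitness d lam ν w.1 w.2}

/-- The rowwise sum of two Young diagrams, whose row lengths are the sums of the row lengths. -/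
def YoungDiagram.rowSum (lam μ : YoungDiagram) : YoungDiagram where
  cells := (Finset.range (lam.colLen 0 + μ.colLen 0) ×ˢ
    Finset.range (lam.rowLen 0 + μ.rowLen 0)).filter
      (fun c => c.2 < lam.rowLen c.1 + μ.rowLen c.1)
  isLowerSet := by
    rintro ⟨i, j⟩ ⟨i', j'⟩ hle h
    obtain ⟨hi, hj⟩ := Prod.mk_le_mk.1 hle
    have h₁ := lam.rowLen_anti i' i hi
    have h₂ := μ.rowLen_anti i' i hi
    simp only [Finset.coe_filter, Finset.mem_product, Finset.mem_range, Set.mem_ofPred_eq] at h ⊢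
    omega

theorem YoungDiagram.mem_rowSum {lam μ : YoungDiagram} {i j : ℕ} :
    (i, j) ∈ lam.rowSum μ ↔ j < lam.rowLen i + μ.rowLen i := by
  rw [← YoungDiagram.mem_cells]
  simp only [YoungDiagram.rowSum, Finset.mem_filter, Finset.mem_product, Finset.mem_range]
  refine ⟨fun h => h.2, fun h => ⟨⟨?_, ?_⟩, h⟩⟩
  · by_cases hl : 0 < lam.rowLen i
    · have := YoungDiagram.mem_iff_lt_colLen.1 (YoungDiagram.mem_iff_lt_rowLen.2 hl)
      omega
    · have hm : 0 < μ.rowLen i := by omega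
      have := YoungDiagram.mem_iff_lt_colLen.1 (YoungDiagram.mem_iff_lt_rowLen.2 hm)
      omega
  · have h₁ := lam.rowLen_anti 0 i (Nat.zero_le i)
    have h₂ := μ.rowLen_anti 0 i (Nat.zero_le i)
    omega

theorem YoungDiagram.rowLen_rowSum (lam μ : YoungDiagram) (i : ℕ) :
    (lam.rowSum μ).rowLen i = lam.rowLen i + μ.rowLen i :=
  eq_of_forall_lt_iff fun _ => by
    rw [← YoungDiagram.mem_iff_lt_rowLen, YoungDiagram.mem_rowSum]

theorem YoungDiagram.le_rowSum (lam μ : YoungDiagram) : lam ≤ lam.rowSum μ := by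
  rintro ⟨i, j⟩ h
  have := YoungDiagram.mem_iff_lt_rowLen.1 h
  exact YoungDiagram.mem_rowSum.2 (by omega)

theorem YoungDiagram.mem_cells_rowSum_sdiff {lam μ : YoungDiagram} {i j : ℕ} :
    (i, j) ∈ (lam.rowSum μ).cells \ lam.cells ↔
      lam.rowLen i ≤ j ∧ j < lam.rowLen i + μ.rowLen i := by
  rw [Finset.mem_sdiff, YoungDiagram.mem_cells, YoungDiagram.mem_cells, YoungDiagram.mem_rowSum,
    YoungDiagram.mem_iff_lt_rowLen]
  omega

/-- The skew shape `(lam + μ) / lam` is obtained from `μ` by translating each row. -/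
theorem YoungDiagram.card_filter_rowSum_sdiff (lam μ : YoungDiagram) (p : ℕ → Prop)
    [DecidablePred p] :
    (((lam.rowSum μ).cells \ lam.cells).filter (fun c => p c.1)).card =
      (μ.cells.filter (fun c => p c.1)).card := by
  refine Finset.card_nbij' (fun c => (c.1, c.2 - lam.rowLen c.1))
    (fun c => (c.1, c.2 + lam.rowLen c.1)) ?_ ?_ ?_ ?_ <;> rintro ⟨i, j⟩ h <;>
    simp only [Finset.coe_filter, Set.mem_ofPred_eq, YoungDiagram.mem_cells_rowSum_sdiff,
      YoungDiagram.mem_cells, YoungDiagram.mem_iff_lt_rowLen] at h ⊢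
  · exact ⟨by omega, h.2⟩
  · exact ⟨by omega, h.2⟩
  · exact Prod.ext rfl (by simp only; omega)
  · exact Prod.ext rfl (by simp only; omega)

theorem YoungDiagram.card_rowSum (lam μ : YoungDiagram) :
    (lam.rowSum μ).card = lam.card + μ.card := by
  have h := YoungDiagram.card_filter_rowSum_sdiff lam μ (fun _ => True)
  simp only [Finset.filter_true] at h
  have := Finset.card_sdiff_add_card_eq_card (YoungDiagram.le_rowSum lam μ)
  change (lam.rowSum μ).cells.card = lam.cells.card + μ.cells.card
  omega

/-- The filling of a skew shape in which every entry is its (1-based) row index. -/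
def rowIndexFilling (ν lam : YoungDiagram) (c : ℕ × ℕ) : ℕ :=
  if c ∈ ν.cells \ lam.cells then c.1 + 1 else 0

theorem isSkewSS_rowIndexFilling {ν lam : YoungDiagram} (h : lam ≤ ν) :
    IsSkewSS ν lam (rowIndexFilling ν lam) := by
  refine ⟨h, fun c hc => ?_, fun c hc => if_neg hc, fun i j₁ j₂ _ h₁ h₂ => ?_,
    fun i₁ i₂ j hi h₁ h₂ => ?_⟩
  · simp only [rowIndexFilling, if_pos hc]
    omega
  · simp only [rowIndexFilling, if_pos h₁, if_pos h₂, le_refl]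
  · simp only [rowIndexFilling, if_pos h₁, if_pos h₂]
    omega

theorem rowCount_rowIndexFilling (ν lam : YoungDiagram) (k l : ℕ) :
    rowCount ν lam (rowIndexFilling ν lam) k l =
      ((ν.cells \ lam.cells).filter (fun c => c.1 = k - 1 ∧ c.1 + 1 = l)).card := by
  unfold rowCount
  congr 1
  exact Finset.filter_congr fun c hc => by simp only [rowIndexFilling, if_pos hc]

theorem isLRTableau_rowSum (lam μ : YoungDiagram) :
    IsLRTableau (lam.rowSum μ) lam μ (rowIndexFilling (lam.rowSum μ) lam) := by
  refine ⟨⟨isSkewSS_rowIndexFilling (YoungDiagram.le_rowSum lam μ), fun l hl => ?_⟩,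
    rowIndexFilling μ ⊥, isSkewSS_rowIndexFilling bot_le, fun k l hk hl => ?_⟩
  · rw [YoungDiagram.rowLen_eq_card, YoungDiagram.row,
      Finset.filter_congr (q := fun c => c.1 + 1 = l)
        fun c hc => by simp only [rowIndexFilling, if_pos hc],
      YoungDiagram.card_filter_rowSum_sdiff lam μ (fun i => i + 1 = l)]
    congr 1
    exact Finset.filter_congr fun c _ => by omega
  · rw [rowCount_rowIndexFilling, rowCount_rowIndexFilling,
      YoungDiagram.card_filter_rowSum_sdiff lam μ (fun i => i = k - 1 ∧ i + 1 = l),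
      YoungDiagram.cells_bot, Finset.sdiff_empty]
    congr 1
    exact Finset.filter_congr fun c _ => by omega

/-- Functions prescribed off a finite set and with finitely many possible values at each point
of that set form a finite set. -/
theorem Set.Finite.functions_prescribed_off {α β : Type*} {s : Set α} (hs : s.Finite)
    {t : α → Set β} (ht : ∀ a ∈ s, (t a).Finite) (g : α → β) :
    {f : α → β | (∀ a ∈ s, f a ∈ t a) ∧ ∀ a ∉ s, f a = g a}.Finite := by
  have := hs.to_subtype
  refine Set.Finite.of_finite_image (f := fun f => s.domRestrict f)
    ((Set.Finite.pi' (t := fun a : s => t a) fun a => ht a a.2).subset ?_) ?_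
  · rintro _ ⟨f, hf, rfl⟩ a
    exact hf.1 a a.2
  · intro f hf f' hf' h
    funext a
    by_cases ha : a ∈ s
    · exact congrFun h ⟨a, ha⟩
    · rw [hf.2 a ha, hf'.2 a ha]

theorem YoungDiagram.finite_Iic (ν : YoungDiagram) : (Set.Iic ν).Finite := by
  refine Set.Finite.of_finite_image (f := YoungDiagram.cells)
    (ν.cells.powerset.finite_toSet.subset ?_) fun _ _ _ _ h => YoungDiagram.ext h
  rintro _ ⟨Y, hY, rfl⟩
  exact Finset.mem_coe.2 (Finset.mem_powerset.2 hY)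

theorem IsSkewSSYT.le_colLen {ν lam μ : YoungDiagram} {T : ℕ × ℕ → ℕ}
    (h : IsSkewSSYT ν lam μ T) (c : ℕ × ℕ) : T c ≤ μ.colLen 0 := by
  by_cases hc : c ∈ ν.cells \ lam.cells
  · have h₁ := h.1.2.1 c hc
    have hpos : 0 < μ.rowLen (T c - 1) := by
      rw [← h.2 (T c) h₁]
      exact Finset.card_pos.2 ⟨c, Finset.mem_filter.2 ⟨hc, rfl⟩⟩
    have := YoungDiagram.mem_iff_lt_colLen.1 (YoungDiagram.mem_iff_lt_rowLen.2 hpos)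
    omega
  · rw [h.1.2.2.1 c hc]
    exact Nat.zero_le _

theorem IsIterWitness.seq_le {d : ℕ} {lam : ℕ → YoungDiagram} {ν : YoungDiagram}
    {seq : ℕ → YoungDiagram} {T : ℕ → ℕ × ℕ → ℕ} (h : IsIterWitness d lam ν seq T)
    {i : ℕ} (hi : i ≤ d - 1) : seq i ≤ ν := by
  rw [← h.2.1]
  induction hi using Nat.decreasingInduction with
  | self => exact le_rfl
  | of_succ k hk ih => exact (h.2.2.1 (k + 1) (by omega) hk).1.1.1.trans ih

theorem finite_setOf_isIterWitness (d : ℕ) (lam : ℕ → YoungDiagram) (ν : YoungDiagram) :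
    {w : (ℕ → YoungDiagram) × (ℕ → ℕ × ℕ → ℕ) | IsIterWitness d lam ν w.1 w.2}.Finite := by
  have hseq := (Set.finite_Iio d).functions_prescribed_off
    (fun _ _ => ν.finite_Iic) (fun _ => ⊥)
  have hT := (Set.finite_Iio d).functions_prescribed_off
    (fun i _ => ν.cells.finite_toSet.functions_prescribed_off
      (fun _ _ => Set.finite_Iic ((lam i).colLen 0)) (fun _ => 0)) (fun _ _ => 0)
  refine (hseq.prod hT).subset ?_
  rintro ⟨seq, T⟩ h
  refine ⟨⟨fun i hi => h.seq_le (Nat.le_sub_one_of_lt hi),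
    fun i hi => h.2.2.2.1 i (not_lt.1 hi)⟩, fun i hi => ?_,
    fun i hi => h.2.2.2.2.2 i (not_lt.1 hi)⟩
  rcases Nat.eq_zero_or_pos i with rfl | hpos
  · rw [h.2.2.2.2.1]
    exact ⟨fun _ _ => Nat.zero_le _, fun _ _ => rfl⟩
  · have hi' := Nat.le_sub_one_of_lt hi
    have hLR := (h.2.2.1 i hpos hi').1
    exact ⟨fun c _ => hLR.le_colLen c, fun c hc => hLR.1.2.2.1 c fun hc' =>
      hc (h.seq_le hi' (Finset.mem_sdiff.1 hc').1)⟩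

/-- Iterated rowwise sums: `iterRowSum lam k = lam 0 + ⋯ + lam k`. -/
def iterRowSum (lam : ℕ → YoungDiagram) : ℕ → YoungDiagram
  | 0 => lam 0
  | k + 1 => (iterRowSum lam k).rowSum (lam (k + 1))

theorem card_iterRowSum (lam : ℕ → YoungDiagram) (k : ℕ) :
    (iterRowSum lam k).card = ∑ i ∈ Finset.range (k + 1), (lam i).card := by
  induction k with
  | zero => simp [iterRowSum]
  | succ k ih => rw [iterRowSum, YoungDiagram.card_rowSum, ih, Finset.sum_range_succ _ (k + 1)]

theorem rowLen_iterRowSum (lam : ℕ → YoungDiagram) (k j : ℕ) :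
    (iterRowSum lam k).rowLen j = ∑ i ∈ Finset.range (k + 1), (lam i).rowLen j := by
  induction k with
  | zero => simp [iterRowSum]
  | succ k ih => rw [iterRowSum, YoungDiagram.rowLen_rowSum, ih, Finset.sum_range_succ _ (k + 1)]

theorem isIterWitness_iterRowSum (k : ℕ) (lam : ℕ → YoungDiagram) :
    IsIterWitness (k + 1) lam (iterRowSum lam k)
      (fun i => if i ≤ k then iterRowSum lam i else ⊥)
      (fun i => if 1 ≤ i ∧ i ≤ k then
        rowIndexFilling (iterRowSum lam i) (iterRowSum lam (i - 1)) else fun _ => 0) := by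
  refine ⟨if_pos (Nat.zero_le k), if_pos le_rfl, fun i h₁ h₂ => ?_,
    fun i hi => if_neg (by omega), if_neg (by omega), fun i hi => if_neg (by omega)⟩
  obtain ⟨i, rfl⟩ := Nat.exists_eq_add_of_le' h₁
  have hk : i + 1 ≤ k := h₂
  simp only [Nat.add_sub_cancel, if_pos hk, if_pos (show i ≤ k by omega),
    if_pos (And.intro h₁ hk)]
  exact isLRTableau_rowSum _ _

theorem stmt5 (d n : ℕ) (hd : 1 ≤ d) (lam : ℕ → YoungDiagram)
    (hsum : ∑ i ∈ Finset.range d, (lam i).card = n) :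
    ∃ ν : YoungDiagram, ν.card = n ∧
      ν.rowLen 0 = ∑ i ∈ Finset.range d, (lam i).rowLen 0 ∧
      0 < iterLR d lam ν := by
  obtain ⟨k, rfl⟩ := Nat.exists_eq_add_of_le' hd
  refine ⟨iterRowSum lam k, (card_iterRowSum lam k).trans hsum, rowLen_iterRowSum lam k 0, ?_⟩
  have := (finite_setOf_isIterWitness (k + 1) lam (iterRowSum lam k)).to_subtype
  exact Nat.card_pos_iff.2 ⟨⟨⟨(_, _), isIterWitness_iterRowSum k lam⟩⟩, this⟩
end

section
/- For every n≥1 and every 0≤m≤n−2, the counting function Z satisfies the recursion Z_n(m) = ∑_{j=n−m−1}^{n−1} Z_j(m−n+j+1) · Z_{n−j}(n−j−1). -/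
/-- The set 𝔗ₙ, encoded as lists of pairs `(i_j, k_j)`:
entries satisfy `1 ≤ i_j - k_j` (i.e. `k_j < i_j`) and `i_j ≤ n-1` (i.e. `i_j + 1 ≤ n`),
the `i_j` are strictly increasing, and the `i_j - k_j` are strictly increasing. -/
def IsTT (n : ℕ) (l : List (ℕ × ℕ)) : Prop :=
  (∀ p ∈ l, p.2 < p.1 ∧ p.1 + 1 ≤ n) ∧
  List.Chain' (· < ·) (l.map Prod.fst) ∧
  List.Chain' (· < ·) (l.map (fun p => p.1 - p.2))

/-- The set of integers covered by the intervals `[i_j - k_j, i_j]`. -/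
def cov (l : List (ℕ × ℕ)) : Finset ℕ :=
  l.foldr (fun p s => Finset.Icc (p.1 - p.2) p.1 ∪ s) ∅

/-- The weight of an element of 𝔗ₙ. -/
def wt (l : List (ℕ × ℕ)) : ℕ := (cov l).card

/-- `Z n m` is the number of elements of 𝔗ₙ of weight `m`. -/
noncomputable def Z (n m : ℕ) : ℕ :=
  Nat.card {l : List (ℕ × ℕ) // IsTT n l ∧ wt l = m}

/-- Membership in `𝔗ₙ` in terms of a single pairwise relation. -/
theorem isTT_iff_pairwise {n : ℕ} {l : List (ℕ × ℕ)} :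
    IsTT n l ↔ (∀ p ∈ l, p.2 < p.1 ∧ p.1 + 1 ≤ n) ∧
      l.Pairwise (fun p q => p.1 < q.1 ∧ p.1 - p.2 < q.1 - q.2) := by
  unfold IsTT List.Chain'
  rw [List.isChain_iff_pairwise, List.isChain_iff_pairwise, List.pairwise_map, List.pairwise_map,
    List.pairwise_and_iff]

theorem mem_cov {l : List (ℕ × ℕ)} {x : ℕ} :
    x ∈ cov l ↔ ∃ p ∈ l, p.1 - p.2 ≤ x ∧ x ≤ p.1 := by
  induction l with
  | nil => simp [cov]
  | cons p l ih =>
    have h : cov (p :: l) = Finset.Icc (p.1 - p.2) p.1 ∪ cov l := rfl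
    simp [h, ih]

theorem IsTT.cov_subset {n : ℕ} {l : List (ℕ × ℕ)} (h : IsTT n l) :
    cov l ⊆ Finset.Icc 1 (n - 1) := by
  intro x hx
  obtain ⟨p, hp, h1, h2⟩ := mem_cov.1 hx
  have := h.1 p hp
  rw [Finset.mem_Icc]
  omega

theorem IsTT.cov_eq_of_wt {n : ℕ} {l : List (ℕ × ℕ)} (h : IsTT n l) (hw : wt l = n - 1) :
    cov l = Finset.Icc 1 (n - 1) := by
  apply Finset.eq_of_subset_of_card_le h.cov_subset
  rw [Nat.card_Icc]
  unfold wt at hw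
  omega

/-- Only finitely many elements of `𝔗ₙ` exist. -/
theorem finite_setOf_isTT (n : ℕ) : {l | IsTT n l}.Finite := by
  apply Set.Finite.of_finite_image (f := List.toFinset)
  · refine (Finset.finite_toSet (Finset.range n ×ˢ Finset.range n).powerset).subset ?_
    rintro _ ⟨l, hl, rfl⟩
    simp only [Finset.coe_powerset, Set.mem_preimage, Set.mem_powerset_iff]
    intro p hp
    have hp' : p ∈ l := by simpa using hp
    have := hl.1 p hp'
    simp only [Finset.coe_product, Finset.coe_range, Set.mem_prod, Set.mem_Iio]
    omega
  · intro l hl l' hl' h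
    have hl := (isTT_iff_pairwise.1 hl).2
    have hl' := (isTT_iff_pairwise.1 hl').2
    have nodup : ∀ {l : List (ℕ × ℕ)},
        l.Pairwise (fun p q => p.1 < q.1 ∧ p.1 - p.2 < q.1 - q.2) → l.Nodup := by
      intro l hl
      refine hl.imp ?_
      rintro p q ⟨h1, -⟩ rfl
      exact lt_irrefl _ h1
    have perm := List.perm_of_nodup_nodup_toFinset_eq (nodup hl) (nodup hl') h
    refine perm.eq_of_pairwise ?_ hl hl'
    intro p q _ _ h1 h2
    exact absurd h1.1 (not_lt.2 h2.1.le)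

/-- Place `b` to the right of the position `j`, after `a`. -/
def glue (j : ℕ) (a b : List (ℕ × ℕ)) : List (ℕ × ℕ) :=
  a ++ b.map (fun p => (p.1 + j, p.2))

theorem isTT_glue {n j : ℕ} {a b : List (ℕ × ℕ)} (hj : j ≤ n) (ha : IsTT j a)
    (hb : IsTT (n - j) b) : IsTT n (glue j a b) := by
  rw [isTT_iff_pairwise] at *
  unfold glue
  simp only [List.mem_append, List.mem_map, List.pairwise_append, List.pairwise_map]
  refine ⟨?_, ha.2, hb.2.imp_of_mem ?_, ?_⟩
  · rintro p (hp | ⟨q, hq, rfl⟩)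
    · have := ha.1 p hp
      omega
    · have := hb.1 q hq
      dsimp only
      omega
  · intro p q hp hq h
    have := hb.1 p hp
    have := hb.1 q hq
    omega
  · rintro p hp _ ⟨q, hq, rfl⟩
    have := ha.1 p hp
    have := hb.1 q hq
    dsimp only
    omega

theorem cov_glue {n j : ℕ} {a b : List (ℕ × ℕ)} (hb : IsTT n b) :
    cov (glue j a b) = cov a ∪ (cov b).map (addRightEmbedding j) := by
  ext x
  simp only [glue, mem_cov, Finset.mem_union, Finset.mem_map, List.mem_append, List.mem_map,
    addRightEmbedding_apply]
  constructor
  · rintro ⟨p, hp | ⟨q, hq, rfl⟩, h1, h2⟩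
    · exact Or.inl ⟨p, hp, h1, h2⟩
    · have := hb.1 q hq
      dsimp only at h1 h2
      exact Or.inr ⟨x - j, ⟨q, hq, by omega, by omega⟩, by omega⟩
  · rintro (⟨p, hp, h1, h2⟩ | ⟨y, ⟨q, hq, h1, h2⟩, rfl⟩)
    · exact ⟨p, Or.inl hp, h1, h2⟩
    · exact ⟨_, Or.inr ⟨q, hq, rfl⟩, by dsimp only; omega, by dsimp only; omega⟩

theorem wt_glue {n j : ℕ} {a b : List (ℕ × ℕ)} (ha : IsTT j a) (hb : IsTT n b) :
    wt (glue j a b) = wt a + wt b := by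
  unfold wt
  rw [cov_glue hb, Finset.card_union_of_disjoint, Finset.card_map]
  rw [Finset.disjoint_left]
  intro x hx hx'
  obtain ⟨y, hy, rfl⟩ := Finset.mem_map.1 hx'
  have h1 := Finset.mem_Icc.1 (ha.cov_subset hx)
  have h2 := Finset.mem_Icc.1 (hb.cov_subset hy)
  rw [addRightEmbedding_apply] at h1
  omega

theorem notMem_cov_glue {n j : ℕ} {a b : List (ℕ × ℕ)} (hj : 1 ≤ j) (ha : IsTT j a)
    (hb : IsTT n b) : j ∉ cov (glue j a b) := by
  rw [cov_glue hb, Finset.mem_union, Finset.mem_map]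
  rintro (h | ⟨y, hy, h⟩)
  · have := Finset.mem_Icc.1 (ha.cov_subset h)
    omega
  · have := Finset.mem_Icc.1 (hb.cov_subset hy)
    rw [addRightEmbedding_apply] at h
    omega

theorem mem_cov_glue {n j x : ℕ} {a b : List (ℕ × ℕ)} (hb : IsTT (n - j) b)
    (hw : wt b = n - j - 1) (hjx : j < x) (hxn : x < n) : x ∈ cov (glue j a b) := by
  rw [cov_glue hb, Finset.mem_union, Finset.mem_map, hb.cov_eq_of_wt hw]
  refine Or.inr ⟨x - j, Finset.mem_Icc.2 (by omega), ?_⟩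
  rw [addRightEmbedding_apply]
  omega

theorem glue_injective {j : ℕ} {a b a' b' : List (ℕ × ℕ)} (ha : IsTT j a) (ha' : IsTT j a')
    (h : glue j a b = glue j a' b') : a = a' ∧ b = b' := by
  have key : ∀ {a b : List (ℕ × ℕ)}, IsTT j a →
      (glue j a b).filter (fun p => p.1 < j) = a := by
    intro a b ha
    unfold glue
    rw [List.filter_append, List.filter_eq_self.2, List.filter_eq_nil_iff.2, List.append_nil]
    · intro p hp
      obtain ⟨q, -, rfl⟩ := List.mem_map.1 hp
      simp
    · intro p hp
      have := ha.1 p hp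
      simp only [decide_eq_true_eq]
      omega
  have haa : a = a' := by rw [← key (b := b) ha, h, key ha']
  subst haa
  refine ⟨rfl, List.map_injective_iff.2 ?_ (List.append_cancel_left h)⟩
  intro p q hpq
  simp only [Prod.mk.injEq, Nat.add_right_cancel_iff] at hpq
  exact Prod.ext hpq.1 hpq.2

/-- A list with increasing first components splits at any threshold. -/
theorem filter_append_filter_of_pairwise {l : List (ℕ × ℕ)} (j : ℕ)
    (h : l.Pairwise (fun p q => p.1 < q.1)) :
    l.filter (fun p => p.1 < j) ++ l.filter (fun p => j ≤ p.1) = l := by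
  induction l with
  | nil => rfl
  | cons p l ih =>
    rw [List.pairwise_cons] at h
    by_cases hp : p.1 < j
    · simpa [hp] using ih h.2
    · have hl : l.filter (fun p => p.1 < j) = [] := by
        rw [List.filter_eq_nil_iff]
        intro q hq
        have := h.1 q hq
        simp only [decide_eq_true_eq]
        omega
      have := ih h.2
      rw [hl, List.nil_append] at this
      simp [hp, hl, this, not_lt.1 hp]

/-- An element of `𝔗ₙ` splits at every uncovered position. -/
theorem IsTT.exists_glue {n j : ℕ} {l : List (ℕ × ℕ)} (h : IsTT n l) (hj : j ∉ cov l) :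
    ∃ a b, IsTT j a ∧ IsTT (n - j) b ∧ glue j a b = l := by
  rw [isTT_iff_pairwise] at h
  have hout : ∀ p ∈ l, p.1 < j ∨ j < p.1 - p.2 := by
    intro p hp
    by_contra hcon
    exact hj (mem_cov.2 ⟨p, hp, by omega, by omega⟩)
  refine ⟨l.filter (fun p => p.1 < j),
    (l.filter (fun p => j ≤ p.1)).map (fun p => (p.1 - j, p.2)), ?_, ?_, ?_⟩
  · rw [isTT_iff_pairwise]
    refine ⟨?_, h.2.filter _⟩
    intro p hp
    simp only [List.mem_filter, decide_eq_true_eq] at hp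
    have := h.1 p hp.1
    omega
  · rw [isTT_iff_pairwise, List.pairwise_map]
    constructor
    · intro p hp
      simp only [List.mem_map, List.mem_filter, decide_eq_true_eq] at hp
      obtain ⟨q, ⟨hq, hjq⟩, rfl⟩ := hp
      have := h.1 q hq
      have := hout q hq
      dsimp only
      omega
    · refine (h.2.filter _).imp_of_mem ?_
      intro p q hp hq hpq
      simp only [List.mem_filter, decide_eq_true_eq] at hp hq
      have := hout p hp.1
      have := hout q hq.1
      omega
  · unfold glue
    rw [List.map_map]
    conv_rhs => rw [← filter_append_filter_of_pairwise j (h.2.imp fun hpq => hpq.1)]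
    congr 1
    conv_rhs => rw [← List.map_id (l.filter (fun p => j ≤ p.1))]
    refine List.map_congr_left ?_
    intro p hp
    simp only [List.mem_filter, decide_eq_true_eq] at hp
    exact Prod.ext (Nat.sub_add_cancel hp.2) rfl

theorem stmt6 (n m : ℕ) (hn : 1 ≤ n) (hm : m + 2 ≤ n) :
    Z n m = ∑ j ∈ Finset.Icc (n - m - 1) (n - 1),
      Z j (m + j + 1 - n) * Z (n - j) (n - j - 1) := by
  have hfin : ∀ n m, Finite {l : List (ℕ × ℕ) // IsTT n l ∧ wt l = m} := fun n m =>
    ((finite_setOf_isTT n).subset fun _ hl => hl.1 : {l | IsTT n l ∧ wt l = m}.Finite)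
  rw [← Finset.sum_coe_sort]
  unfold Z
  simp only [← Nat.card_prod]
  rw [← Nat.card_sigma]
  symm
  refine Nat.card_eq_of_bijective
    (fun x => ⟨glue x.1 x.2.1.1 x.2.2.1, ?_, ?_⟩) ⟨?_, ?_⟩
  · have := Finset.mem_Icc.1 x.1.2
    exact isTT_glue (by omega) x.2.1.2.1 x.2.2.2.1
  · have := Finset.mem_Icc.1 x.1.2
    rw [wt_glue x.2.1.2.1 x.2.2.2.1, x.2.1.2.2, x.2.2.2.2]
    omega
  · rintro ⟨⟨j, hj⟩, ⟨a, ha, hwa⟩, ⟨b, hb, hwb⟩⟩ ⟨⟨j', hj'⟩, ⟨a', ha', hwa'⟩, ⟨b', hb', hwb'⟩⟩ h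
    have h : glue j a b = glue j' a' b' := congrArg Subtype.val h
    rw [Finset.mem_Icc] at hj hj'
    dsimp only at ha hb hwb ha' hb' hwb'
    obtain hlt | rfl | hlt := lt_trichotomy j j'
    · exact absurd (h ▸ mem_cov_glue hb hwb hlt (by omega))
        (notMem_cov_glue (by omega) ha' hb')
    · obtain ⟨rfl, rfl⟩ := glue_injective ha ha' h
      rfl
    · exact absurd (h ▸ mem_cov_glue hb' hwb' hlt (by omega))
        (notMem_cov_glue (by omega) ha hb)
  · rintro ⟨l, hl, hw⟩
    have hne : (Finset.Icc 1 (n - 1) \ cov l).Nonempty := by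
      rw [Finset.sdiff_nonempty]
      intro hsub
      have := Finset.card_le_card hsub
      rw [Nat.card_Icc] at this
      unfold wt at hw
      omega
    obtain ⟨j, hj, hmax⟩ := Finset.exists_max_image _ id hne
    rw [Finset.mem_sdiff, Finset.mem_Icc] at hj
    obtain ⟨a, b, ha, hb, rfl⟩ := hl.exists_glue hj.2
    have hwb : wt b = n - j - 1 := by
      have hcov : cov b = Finset.Icc 1 (n - j - 1) := by
        refine hb.cov_subset.antisymm fun x hx => ?_
        rw [Finset.mem_Icc] at hx
        by_contra hxb
        have hxj : x + j ∉ cov (glue j a b) := by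
          rw [cov_glue hb, Finset.mem_union, Finset.mem_map]
          rintro (hxa | ⟨y, hy, hyx⟩)
          · have := Finset.mem_Icc.1 (ha.cov_subset hxa)
            omega
          · rw [addRightEmbedding_apply, Nat.add_right_cancel_iff] at hyx
            exact hxb (hyx ▸ hy)
        have := hmax (x + j) (Finset.mem_sdiff.2 ⟨Finset.mem_Icc.2 (by omega), hxj⟩)
        simp only [id] at this
        omega
      rw [wt, hcov, Nat.card_Icc]
      omega
    rw [wt_glue ha hb] at hw
    exact ⟨⟨⟨j, Finset.mem_Icc.2 (by omega)⟩, ⟨a, ha, by dsimp only; omega⟩, ⟨b, hb, hwb⟩⟩, rfl⟩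
end

section
/- For every n≥1, ∑_{m=0}^{n−1} 2^{n−m} · Z_n(m) = (n+1) · C_n. -/
/-- The lists `(i_j, k_j)` with `i_j` in `[b, b + u)`, with `a ≤ i_j - k_j`, and with `i_j` and
`i_j - k_j` strictly increasing, built by deciding whether some interval ends at `b`. -/
def intervalLists : ℕ → ℕ → ℕ → Finset (List (ℕ × ℕ))
  | 0, _, _ => {[]}
  | u + 1, b, a => intervalLists u (b + 1) a ∪
      (Finset.Icc a b).biUnion fun c =>
        (intervalLists u (b + 1) (c + 1)).image (List.cons (b, b - c))

theorem mem_intervalLists {u b a : ℕ} (ha : 1 ≤ a) {l : List (ℕ × ℕ)} :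
    l ∈ intervalLists u b a ↔
      (∀ p ∈ l, a ≤ p.1 - p.2 ∧ b ≤ p.1 ∧ p.1 < b + u) ∧
        l.Pairwise fun p q => p.1 < q.1 ∧ p.1 - p.2 < q.1 - q.2 := by
  induction u generalizing b a l with
  | zero =>
    simp only [intervalLists, Finset.mem_singleton]
    constructor
    · rintro rfl
      simp
    · rintro ⟨h, -⟩
      refine List.eq_nil_iff_forall_not_mem.2 fun p hp => ?_
      have := h p hp
      omega
  | succ u ih =>
    simp only [intervalLists, Finset.mem_union, Finset.mem_biUnion, Finset.mem_Icc,
      Finset.mem_image]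
    constructor
    · rintro (h | ⟨c, hc, l', h, rfl⟩)
      · rw [ih ha] at h
        exact ⟨fun p hp => by have := h.1 p hp; omega, h.2⟩
      · rw [ih (by omega)] at h
        simp only [List.forall_mem_cons, List.pairwise_cons]
        refine ⟨⟨by omega, fun p hp => ?_⟩, fun p hp => ?_, h.2⟩
        · have := h.1 p hp
          omega
        · have := h.1 p hp
          omega
    · rintro ⟨h, hl⟩
      rcases l with _ | ⟨⟨i, k⟩, l⟩
      · exact Or.inl ((ih ha).2 (by simp))
      · simp only [List.forall_mem_cons, List.pairwise_cons] at h hl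
        by_cases hi : i = b
        · subst hi
          refine Or.inr ⟨i - k, by omega, l, (ih (by omega)).2 ⟨fun p hp => ?_, hl.2⟩, ?_⟩
          · have := h.2 p hp
            have := hl.1 p hp
            omega
          · rw [show i - (i - k) = k by omega]
        · refine Or.inl ((ih ha).2 ⟨?_, by simpa only [List.pairwise_cons] using hl⟩)
          simp only [List.forall_mem_cons]
          refine ⟨by omega, fun p hp => ?_⟩
          have := h.2 p hp
          have := hl.1 p hp
          omega

/-- The number of points of `[b, b + u)` not covered by the intervals of `l`. -/
def uncovered (u b : ℕ) (l : List (ℕ × ℕ)) : ℕ := (Finset.Ico b (b + u) \ cov l).card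

theorem two_pow_uncovered_succ {u b a : ℕ} (ha : 1 ≤ a) {l : List (ℕ × ℕ)}
    (hl : l ∈ intervalLists u (b + 1) a) :
    2 ^ uncovered (u + 1) b l = 2 ^ uncovered u (b + 1) l +
      if l ∈ intervalLists u (b + 1) (b + 1) then 2 ^ uncovered u (b + 1) l else 0 := by
  rw [mem_intervalLists ha] at hl
  have hIco : Finset.Ico b (b + (u + 1)) = insert b (Finset.Ico (b + 1) (b + 1 + u)) := by
    ext x
    simp only [Finset.mem_Ico, Finset.mem_insert]
    omega
  have hmem : l ∈ intervalLists u (b + 1) (b + 1) ↔ b ∉ cov l := by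
    rw [mem_intervalLists (by omega), mem_cov]
    constructor
    · rintro ⟨h, -⟩ ⟨p, hp, hpb⟩
      have := h p hp
      omega
    · intro h
      refine ⟨fun p hp => ⟨?_, (hl.1 p hp).2⟩, hl.2⟩
      by_contra hlt
      have := hl.1 p hp
      exact h ⟨p, hp, by omega, by omega⟩
  simp only [hmem, uncovered, hIco]
  split_ifs with h
  · rw [Finset.insert_sdiff_of_mem _ h, add_zero]
  · rw [Finset.insert_sdiff_of_notMem _ h, Finset.card_insert_of_notMem (by simp), pow_succ]
    omega

theorem uncovered_cons (u b c : ℕ) (l : List (ℕ × ℕ)) :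
    uncovered (u + 1) b ((b, b - c) :: l) = uncovered u (b + 1) l := by
  unfold uncovered
  congr 1
  ext x
  simp only [Finset.mem_sdiff, Finset.mem_Ico, mem_cov, List.exists_mem_cons_iff]
  constructor
  · rintro ⟨hx, h⟩
    push Not at h
    exact ⟨by omega, fun ⟨p, hp, h'⟩ => absurd (h.2 p hp h'.1) (by omega)⟩
  · rintro ⟨hx, h⟩
    exact ⟨by omega, fun h' => h'.elim (by omega) h⟩

theorem sum_intervalLists_succ {u b a : ℕ} (ha : 1 ≤ a) (hab : a ≤ b) :
    ∑ l ∈ intervalLists (u + 1) b a, 2 ^ uncovered (u + 1) b l =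
      ∑ l ∈ intervalLists u (b + 1) a, 2 ^ uncovered u (b + 1) l +
      ∑ l ∈ intervalLists u (b + 1) (b + 1), 2 ^ uncovered u (b + 1) l +
      ∑ c ∈ Finset.Icc a b,
        ∑ l ∈ intervalLists u (b + 1) (c + 1), 2 ^ uncovered u (b + 1) l := by
  have hsub : intervalLists u (b + 1) (b + 1) ⊆ intervalLists u (b + 1) a := by
    intro l
    rw [mem_intervalLists ha, mem_intervalLists (by omega)]
    exact fun h => ⟨fun p hp => ⟨by have := h.1 p hp; omega, (h.1 p hp).2⟩, h.2⟩
  rw [intervalLists, Finset.sum_union, Finset.sum_biUnion]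
  · congr 1
    · rw [Finset.sum_congr rfl fun l hl => two_pow_uncovered_succ ha hl,
        Finset.sum_add_distrib, ← Finset.sum_filter, Finset.filter_mem_eq_inter,
        Finset.inter_eq_right.2 hsub]
    · refine Finset.sum_congr rfl fun c _ => ?_
      rw [Finset.sum_image (List.cons_injective.injOn)]
      exact Finset.sum_congr rfl fun l _ => by rw [uncovered_cons]
  · intro c hc c' hc' hne
    simp only [Finset.coe_Icc, Set.mem_Icc] at hc hc'
    refine Finset.disjoint_left.2 fun l hl hl' => hne ?_
    simp only [Finset.mem_image] at hl hl'
    obtain ⟨l₁, -, rfl⟩ := hl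
    obtain ⟨l₂, -, h⟩ := hl'
    simp only [List.cons.injEq, Prod.mk.injEq] at h
    omega
  · refine Finset.disjoint_left.2 fun l hl hl' => ?_
    simp only [Finset.mem_biUnion, Finset.mem_image] at hl'
    obtain ⟨c, -, l', -, rfl⟩ := hl'
    have := ((mem_intervalLists ha).1 hl).1 _ List.mem_cons_self
    omega

theorem choose_eq_sum_choose (u v : ℕ) :
    (2 * (u + 1) + v + 1).choose (u + 1) =
      (2 * u + 1).choose u + ∑ j ∈ Finset.range (v + 2), (2 * u + j + 1).choose u := by
  induction v with
  | zero =>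
    rw [show 2 * (u + 1) + 0 + 1 = 2 * u + 1 + 1 + 1 by ring, Nat.choose_succ_succ',
      Nat.choose_succ_succ' (2 * u + 1) u, Nat.choose_symm_half, zero_add, Finset.sum_range_succ,
      Finset.sum_range_one]
    ring
  | succ v ih =>
    rw [Finset.sum_range_succ _ (v + 2), ← add_assoc (Nat.choose _ _), ← ih,
      show 2 * (u + 1) + (v + 1) + 1 = 2 * (u + 1) + v + 1 + 1 by ring, Nat.choose_succ_succ',
      show 2 * (u + 1) + v + 1 = 2 * u + (v + 2) + 1 by ring, add_comm]

theorem sum_intervalLists (u : ℕ) {b a : ℕ} (ha : 1 ≤ a) (hab : a ≤ b) :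
    ∑ l ∈ intervalLists u b a, 2 ^ uncovered u b l = (2 * u + (b - a) + 1).choose u := by
  induction u generalizing b a with
  | zero => simp [intervalLists, uncovered]
  | succ u ih =>
    have hsum : ∑ c ∈ Finset.Icc a b,
        ∑ l ∈ intervalLists u (b + 1) (c + 1), 2 ^ uncovered u (b + 1) l =
          ∑ j ∈ Finset.range (b - a + 1), (2 * u + j + 1).choose u := by
      refine Finset.sum_bij' (fun c _ => b - c) (fun j _ => b - j) ?_ ?_ ?_ ?_ ?_ <;>
        simp only [Finset.mem_Icc, Finset.mem_range]
      · omega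
      · omega
      · omega
      · omega
      · intro c hc
        rw [ih (by omega) (by omega), Nat.add_sub_add_right]
    rw [sum_intervalLists_succ ha hab, hsum, ih ha (by omega), ih (by omega) le_rfl,
      choose_eq_sum_choose, Finset.sum_range_succ _ (b - a + 1), Nat.sub_self,
      show b + 1 - a = b - a + 1 by omega]
    ring

theorem isTT_succ_iff {n : ℕ} {l : List (ℕ × ℕ)} :
    IsTT (n + 1) l ↔ l ∈ intervalLists n 1 1 := by
  rw [mem_intervalLists le_rfl, IsTT, List.Chain', List.Chain', List.isChain_iff_pairwise,
    List.isChain_iff_pairwise,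
    List.pairwise_map, List.pairwise_map, ← List.pairwise_and_iff]
  refine and_congr_left fun _ => forall₂_congr fun p _ => ?_
  omega

theorem uncovered_add_wt {n : ℕ} {l : List (ℕ × ℕ)} (hl : l ∈ intervalLists n 1 1) :
    uncovered n 1 l + wt l = n := by
  have hsub : cov l ⊆ Finset.Ico 1 (1 + n) := by
    intro x hx
    obtain ⟨p, hp, h⟩ := mem_cov.1 hx
    have := ((mem_intervalLists le_rfl).1 hl).1 p hp
    rw [Finset.mem_Ico]
    omega
  rw [uncovered, wt, Finset.card_sdiff_add_card_eq_card hsub, Nat.card_Ico]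
  omega

theorem Z_succ_eq (n m : ℕ) :
    Z (n + 1) m = ((intervalLists n 1 1).filter fun l => wt l = m).card := by
  rw [Z, ← Nat.card_eq_finsetCard]
  exact Nat.card_congr (Equiv.subtypeEquivRight fun l => by rw [Finset.mem_filter, isTT_succ_iff])

theorem stmt8 (n : ℕ) (hn : 1 ≤ n) :
    ∑ m ∈ Finset.range n, 2 ^ (n - m) * Z n m = (n + 1) * catalan n := by
  obtain ⟨n, rfl⟩ := Nat.exists_eq_add_of_le' hn
  have hmaps : ∀ l ∈ intervalLists n 1 1, wt l ∈ Finset.range (n + 1) := fun l hl => by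
    have := uncovered_add_wt hl
    rw [Finset.mem_range]
    omega
  calc ∑ m ∈ Finset.range (n + 1), 2 ^ (n + 1 - m) * Z (n + 1) m
      = ∑ m ∈ Finset.range (n + 1), ∑ l ∈ intervalLists n 1 1 with wt l = m,
          2 * 2 ^ uncovered n 1 l := by
        refine Finset.sum_congr rfl fun m _ => ?_
        rw [Z_succ_eq, mul_comm, ← smul_eq_mul, ← Finset.sum_const]
        refine Finset.sum_congr rfl fun l hl => ?_
        rw [Finset.mem_filter] at hl
        have := uncovered_add_wt hl.1
        rw [← pow_succ', show n + 1 - m = uncovered n 1 l + 1 by omega]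
    _ = 2 * (2 * n + 1).choose n := by
        rw [Finset.sum_fiberwise_of_maps_to hmaps, ← Finset.mul_sum,
          sum_intervalLists n le_rfl le_rfl, Nat.sub_self, add_zero]
    _ = (n + 1 + 1) * catalan (n + 1) := by
        rw [succ_mul_catalan_eq_centralBinom, Nat.centralBinom_eq_two_mul_choose,
          show 2 * (n + 1) = 2 * n + 1 + 1 by ring, Nat.choose_succ_succ', Nat.choose_symm_half,
          two_mul]
end

section
/- Let d,n≥1. Then the quotient A_{d,n}/R'(1) is a finite-dimensional ℂ-algebra of dimension dim_ℂ(A_{d,n}/R'(1)) = (2^{n−1}−1)d² − (2^{n−1}−2)d. -/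
/-- The group algebra `A_{d,n} = ℂ[(ℤ/dℤ)ⁿ]`. -/
abbrev Adn (d n : ℕ) : Type :=
  MonoidAlgebra ℂ (Multiplicative (Fin n → ZMod d))

/-- The monomial `x₁^{r 1} ⋯ xₙ^{r n}` in `A_{d,n}`, where the `j`-th coordinate (0-based
`j : Fin n`) corresponds to the generator `x_{j+1}`. -/
noncomputable def mono (d n : ℕ) (r : ℕ → ℕ) : Adn d n :=
  MonoidAlgebra.of ℂ (Multiplicative (Fin n → ZMod d))
    (Multiplicative.ofAdd fun j : Fin n => ((r ((j : ℕ) + 1) : ℤ) : ZMod d))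

/-- The generator `x_s` of `A_{d,n}` (for `1 ≤ s ≤ n`). -/
noncomputable def xgen (d n : ℕ) (s : ℕ) : Adn d n :=
  mono d n fun t => if t = s then 1 else 0

/-- The ideal `R'(1)` of `A_{d,n}`, generated by the elements
`(x_i - x_j)(x_i - x_k)(x_j - x_k)` for `1 ≤ i < j < k ≤ n`. -/
noncomputable def Rone (d n : ℕ) : Ideal (Adn d n) :=
  Ideal.span {p | ∃ i j k : ℕ, 1 ≤ i ∧ i < j ∧ j < k ∧ k ≤ n ∧
    p = (xgen d n i - xgen d n j) * (xgen d n i - xgen d n k) * (xgen d n j - xgen d n k)}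

/-- A tuple takes at most two distinct values. -/
def AtMostTwoValues {ι α : Type*} (c : ι → α) : Prop :=
  ∀ i j k, c i = c j ∨ c i = c k ∨ c j = c k

theorem atMostTwoValues_of_lt {ι α : Type*} [LinearOrder ι] {c : ι → α}
    (h : ∀ i j k, i < j → j < k → c i = c j ∨ c i = c k ∨ c j = c k) : AtMostTwoValues c := by
  intro i j k
  have h₁ := h i j k
  have h₂ := h i k j
  have h₃ := h j i k
  have h₄ := h j k i
  have h₅ := h k i j
  have h₆ := h k j i
  rcases lt_trichotomy i j with hij | hij | hij <;>
    rcases lt_trichotomy j k with hjk | hjk | hjk <;>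
    rcases lt_trichotomy i k with hik | hik | hik <;> grind

open Classical in
theorem card_atMostTwoValues (m : ℕ) (α : Type*) [Fintype α] :
    Fintype.card {c : Fin (m + 1) → α // AtMostTwoValues c} =
      Fintype.card α +
        (Fintype.card α * Fintype.card α - Fintype.card α) * (2 ^ m - 1) := by
  have hconst : (Finset.univ.filter fun c : Fin (m + 1) → α =>
      AtMostTwoValues c ∧ ∀ i, c i = c 0).card = Fintype.card α := by
    rw [← Finset.card_univ]
    refine Finset.card_nbij' (fun c => c 0) (fun a _ => a) ?_ ?_ ?_ ?_
    · simp [Set.MapsTo]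
    · intro a _
      rw [Finset.mem_coe, Finset.mem_filter]
      simp [AtMostTwoValues]
    · intro c hc
      simp only [Finset.coe_filter, Finset.mem_univ, true_and, Set.mem_ofPred_eq] at hc
      exact funext fun i => (hc.2 i).symm
    · intro a _
      rfl
  have hnonconst : (Finset.univ.filter fun c : Fin (m + 1) → α =>
      AtMostTwoValues c ∧ ¬ ∀ i, c i = c 0).card =
        (Fintype.card α * Fintype.card α - Fintype.card α) * (2 ^ m - 1) := by
    have hcard : ((Finset.univ : Finset α).offDiag ×ˢ
        (Finset.univ : Finset (Finset (Fin m))).erase ∅).card =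
        (Fintype.card α * Fintype.card α - Fintype.card α) * (2 ^ m - 1) := by
      rw [Finset.card_product, Finset.offDiag_card, Finset.card_erase_of_mem (Finset.mem_univ _)]
      simp
    rw [← hcard]
    symm
    refine Finset.card_nbij
      (fun t => Fin.cons t.1.1 fun i => if i ∈ t.2 then t.1.2 else t.1.1) ?_ ?_ ?_
    · rintro ⟨⟨a, b⟩, S⟩ h
      simp only [Finset.coe_product, Set.mem_prod, Finset.mem_coe, Finset.mem_offDiag,
        Finset.mem_erase, Finset.mem_univ, true_and, and_true] at h
      obtain ⟨hab, hS⟩ := h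
      simp only [Finset.coe_filter, Finset.mem_univ, true_and, Set.mem_ofPred_eq]
      refine ⟨?_, fun hall => ?_⟩
      · have key : ∀ i : Fin (m + 1), (Fin.cons a fun i => if i ∈ S then b else a :
            Fin (m + 1) → α) i = a ∨ (Fin.cons a fun i => if i ∈ S then b else a :
            Fin (m + 1) → α) i = b := by
          intro i
          refine Fin.cases (by simp) (fun i => ?_) i
          by_cases hi : i ∈ S <;> simp [hi]
        intro i j k
        have hi := key i
        have hj := key j
        have hk := key k
        grind
      · obtain ⟨s, hs⟩ := Finset.nonempty_iff_ne_empty.mpr hS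
        have := hall s.succ
        simp [hs] at this
        exact hab this.symm
    · rintro ⟨⟨a, b⟩, S⟩ h ⟨⟨a', b'⟩, S'⟩ h' heq
      simp only [Finset.coe_product, Set.mem_prod, Finset.mem_coe, Finset.mem_offDiag,
        Finset.mem_erase, Finset.mem_univ, true_and, and_true] at h h'
      obtain ⟨hab, hS⟩ := h
      obtain ⟨hab', hS'⟩ := h'
      simp only at heq
      obtain ⟨rfl, htail⟩ := Fin.cons_inj.mp heq
      have hSS' : S = S' := by
        ext i
        have := congrFun htail i
        grind
      subst hSS'
      obtain ⟨s, hs⟩ := Finset.nonempty_iff_ne_empty.mpr hS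
      have := congrFun htail s
      simp only [hs, if_true] at this
      rw [this]
    · intro c hc
      simp only [Finset.coe_filter, Finset.mem_univ, true_and, Set.mem_ofPred_eq] at hc
      obtain ⟨htwo, hne⟩ := hc
      push Not at hne
      obtain ⟨i, hi⟩ := hne
      obtain ⟨s, rfl⟩ := Fin.exists_succ_eq.mpr (fun h0 : i = 0 => hi (by rw [h0]))
      refine ⟨⟨⟨c 0, c s.succ⟩, Finset.univ.filter fun t => c t.succ ≠ c 0⟩, ?_, ?_⟩
      · simp only [Finset.coe_product, Set.mem_prod, Finset.mem_coe, Finset.mem_offDiag,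
          Finset.mem_erase, Finset.mem_univ, true_and, and_true]
        exact ⟨hi.symm, Finset.nonempty_iff_ne_empty.mp ⟨s, by simpa using hi⟩⟩
      · funext t
        refine Fin.cases (by simp) (fun t => ?_) t
        have := htwo 0 s.succ t.succ
        simp only [Fin.cons_succ, Finset.mem_filter, Finset.mem_univ, true_and]
        grind
  rw [Fintype.card_subtype, ← hnonconst]
  conv_rhs => rw [← hconst]
  rw [← Finset.filter_filter, ← Finset.filter_filter, Finset.card_filter_add_card_filter_not]

/-- Evaluation of the group algebra at the point `(ζ ^ c 0, …, ζ ^ c (n - 1))`, where `ζ` is the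
standard primitive `d`-th root of unity. -/
noncomputable def evalAt (d n : ℕ) [NeZero d] (c : Fin n → ZMod d) : Adn d n →ₐ[ℂ] ℂ :=
  MonoidAlgebra.lift ℂ ℂ (Multiplicative (Fin n → ZMod d))
    { toFun := fun g => ∏ j, ZMod.stdAddChar (c j * g.toAdd j)
      map_one' := by simp
      map_mul' := fun g h => by simp [mul_add, AddChar.map_add_eq_mul, Finset.prod_mul_distrib] }

theorem evalAt_xgen (d n : ℕ) [NeZero d] (c : Fin n → ZMod d) (j : Fin n) :
    evalAt d n c (xgen d n (j + 1)) = ZMod.stdAddChar (c j) := by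
  simp only [evalAt, xgen, mono, MonoidAlgebra.lift_of, MonoidHom.coe_mk, OneHom.coe_mk,
    toAdd_ofAdd]
  rw [Finset.prod_eq_single j]
  · simp
  · intro b _ hb
    have : (b : ℕ) ≠ j := fun h => hb (Fin.ext h)
    simp [this]
  · simp

/-- The joint evaluation of the group algebra at all tuples of `d`-th roots of unity. -/
noncomputable def evalAll (d n : ℕ) [NeZero d] : Adn d n →ₐ[ℂ] ((Fin n → ZMod d) → ℂ) :=
  AlgHom.pi (evalAt d n)

theorem evalAll_apply (d n : ℕ) [NeZero d] (f : Adn d n) (c : Fin n → ZMod d) :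
    evalAll d n f c = evalAt d n c f := rfl

/-- An element of the group algebra that vanishes at every point except `c`. -/
theorem exists_evalAt_eq_zero_iff (d n : ℕ) [NeZero d] (c : Fin n → ZMod d) :
    ∃ f : Adn d n, ∀ c', evalAt d n c' f = 0 ↔ c' ≠ c := by
  refine ⟨∏ j : Fin n, ∏ a ∈ Finset.univ.erase (c j),
    (xgen d n (j + 1) - algebraMap ℂ _ (ZMod.stdAddChar a)), fun c' => ?_⟩
  simp only [map_prod, map_sub, evalAt_xgen, AlgHom.commutes, Finset.prod_eq_zero_iff,
    Algebra.algebraMap_self, RingHom.id_apply, sub_eq_zero, Finset.mem_erase, Finset.mem_univ,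
    true_and, and_true, ZMod.injective_stdAddChar.eq_iff, exists_eq_right', ne_eq, funext_iff,
    not_forall]

theorem evalAll_surjective (d n : ℕ) [NeZero d] : Function.Surjective (evalAll d n) := by
  choose F hF using exists_evalAt_eq_zero_iff d n
  intro g
  refine ⟨∑ c, (g c / evalAt d n c (F c)) • F c, funext fun c' => ?_⟩
  rw [evalAll_apply, map_sum, Finset.sum_eq_single c']
  · have : evalAt d n c' (F c') ≠ 0 := fun h => (hF c' c').mp h rfl
    simp [this]
  · intro b _ hb
    simp [(hF b c').mpr hb.symm]
  · simp

theorem evalAll_injective (d n : ℕ) [NeZero d] : Function.Injective (evalAll d n) := by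
  have : FiniteDimensional ℂ (Adn d n) :=
    Module.Finite.of_basis (MonoidAlgebra.basis (Multiplicative (Fin n → ZMod d)) ℂ)
  refine (LinearMap.injective_iff_surjective_of_finrank_eq_finrank
    (f := (evalAll d n).toLinearMap) ?_).mpr (evalAll_surjective d n)
  rw [Module.finrank_eq_card_basis (MonoidAlgebra.basis (Multiplicative (Fin n → ZMod d)) ℂ),
    Module.finrank_fintype_fun_eq_card]
  exact Fintype.card_congr Multiplicative.toAdd

/-- The ideal `R'(1)` consists of the elements vanishing at all points with at most two distinct
coordinates. -/
theorem mem_Rone_iff (d n : ℕ) [NeZero d] (f : Adn d n) :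
    f ∈ Rone d n ↔ ∀ c, AtMostTwoValues c → evalAt d n c f = 0 := by
  constructor
  · intro hf c hc
    suffices Rone d n ≤ RingHom.ker (evalAt d n c) from this hf
    refine Ideal.span_le.mpr ?_
    rintro _ ⟨i, j, k, hi, hij, hjk, hk, rfl⟩
    obtain ⟨i, rfl⟩ := Nat.exists_eq_add_of_le' hi
    obtain ⟨j, rfl⟩ := Nat.exists_eq_add_of_le' (hi.trans hij.le)
    obtain ⟨k, rfl⟩ := Nat.exists_eq_add_of_le' (hi.trans (hij.trans hjk).le)
    have hi' := evalAt_xgen d n c ⟨i, by omega⟩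
    have hj' := evalAt_xgen d n c ⟨j, by omega⟩
    have hk' := evalAt_xgen d n c ⟨k, by omega⟩
    simp only at hi' hj' hk'
    simp only [SetLike.mem_coe, RingHom.mem_ker, map_mul, map_sub, hi', hj', hk']
    rcases hc ⟨i, by omega⟩ ⟨j, by omega⟩ ⟨k, by omega⟩ with h | h | h <;> simp [h]
  · intro hf
    choose e he using fun c => evalAll_surjective d n (Pi.single c 1)
    have hfe : f = ∑ c, evalAt d n c f • e c := by
      apply evalAll_injective d n
      ext c'
      simp only [map_sum, map_smul, he, Finset.sum_apply, Pi.smul_apply, Pi.single_apply]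
      simp [evalAll_apply]
    rw [hfe]
    refine Ideal.sum_mem _ fun c _ => ?_
    by_cases hc : AtMostTwoValues c
    · simp [hf c hc]
    · have : ∃ i j k, i < j ∧ j < k ∧ ¬ (c i = c j ∨ c i = c k ∨ c j = c k) := by
        by_contra! h
        exact hc (atMostTwoValues_of_lt fun i j k hij hjk => by
          have := h i j k hij hjk
          tauto)
      obtain ⟨i, j, k, hij, hjk, hne⟩ := this
      push Not at hne
      set p : Adn d n := (xgen d n (i + 1) - xgen d n (j + 1)) *
        (xgen d n (i + 1) - xgen d n (k + 1)) * (xgen d n (j + 1) - xgen d n (k + 1)) with hp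
      have hpmem : p ∈ Rone d n :=
        Ideal.subset_span ⟨i + 1, j + 1, k + 1, by omega, by simpa using hij,
          by simpa using hjk, k.isLt, rfl⟩
      have hpc : evalAt d n c p ≠ 0 := by
        simp only [hp, map_mul, map_sub, evalAt_xgen, ne_eq, mul_eq_zero, sub_eq_zero,
          ZMod.injective_stdAddChar.eq_iff]
        tauto
      have hec : e c = (evalAt d n c p)⁻¹ • (e c * p) := by
        apply evalAll_injective d n
        ext c'
        rw [map_smul, Pi.smul_apply, map_mul (evalAll d n), he, Pi.mul_apply, evalAll_apply]
        by_cases h : c' = c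
        · subst h
          simp [hpc]
        · simp [h]
      rw [hec, smul_smul]
      exact Submodule.smul_of_tower_mem _ _ (Ideal.mul_mem_left _ _ hpmem)

/-- The quotient by `R'(1)` is the algebra of functions on the points with at most two distinct
coordinates. -/
theorem nonempty_quotient_Rone_equiv (d n : ℕ) [NeZero d] :
    Nonempty ((Adn d n ⧸ Rone d n) ≃ₐ[ℂ]
      ({c : Fin n → ZMod d // AtMostTwoValues c} → ℂ)) := by
  let φ : Adn d n →ₐ[ℂ] ({c : Fin n → ZMod d // AtMostTwoValues c} → ℂ) :=
    AlgHom.pi fun c => evalAt d n c.1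
  have hsurj : Function.Surjective φ := by
    intro g
    classical
    obtain ⟨f, hf⟩ := evalAll_surjective d n
      fun c => if h : AtMostTwoValues c then g ⟨c, h⟩ else 0
    refine ⟨f, funext fun c => (congrFun hf c.1).trans ?_⟩
    simp [c.2]
  have hker : Rone d n = RingHom.ker φ := by
    ext f
    rw [mem_Rone_iff, RingHom.mem_ker, funext_iff, Subtype.forall]
    rfl
  exact ⟨(Ideal.quotientEquivAlgOfEq ℂ hker).trans
    (Ideal.quotientKerAlgEquivOfSurjective hsurj)⟩

theorem stmt10 (d n : ℕ) (hd : 1 ≤ d) (hn : 1 ≤ n) :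
    FiniteDimensional ℂ (Adn d n ⧸ Rone d n) ∧
    (Module.finrank ℂ (Adn d n ⧸ Rone d n) : ℤ) =
      (2 ^ (n - 1) - 1) * (d : ℤ) ^ 2 - (2 ^ (n - 1) - 2) * (d : ℤ) := by
  classical
  have : NeZero d := ⟨by omega⟩
  obtain ⟨e⟩ := nonempty_quotient_Rone_equiv d n
  refine ⟨Module.Finite.equiv e.toLinearEquiv.symm, ?_⟩
  obtain ⟨m, rfl⟩ := Nat.exists_eq_add_of_le' hn
  rw [e.toLinearEquiv.finrank_eq, Module.finrank_fintype_fun_eq_card]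
  have hcard := card_atMostTwoValues m (ZMod d)
  rw [ZMod.card] at hcard
  rw [hcard, Nat.add_sub_cancel]
  push_cast [Nat.cast_sub (Nat.le_mul_self d), Nat.cast_sub (Nat.one_le_two_pow (n := m))]
  ring
end

section
/- In the Yokonuma–Hecke algebra Y_{d,n}(u) with n≥3, set G_{i,i+1} := g_i g_{i+1} g_i + g_i g_{i+1} + g_{i+1} g_i + g_i + g_{i+1} + 1 for 1≤i≤n−2, and let w := g_1 g_2 ⋯ g_{n−1} (an invertible element). Then for every 1≤i≤n−2, G_{i,i+1} = w^{i−1} · G_{1,2} · w^{−(i−1)}. Consequently the two-sided ideal of Y_{d,n}(u) generated by G_{1,2},…,G_{n−2,n−1} equals the two-sided ideal generated by the single element G_{1,2}. -/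
noncomputable section

/-- The field `K = ℂ(u)` of rational functions over `ℂ`. -/
abbrev K : Type := RatFunc ℂ

/-- The indeterminate `u ∈ ℂ(u)`. -/
def uu : K := RatFunc.X

/-- The free `K`-algebra on generators `g_i` (`i : ℕ`, left summand) and `t_j`
(`j : ℕ`, right summand); the generators with invalid indices are killed by the relations. -/
abbrev FA : Type := FreeAlgebra K (ℕ ⊕ ℕ)

/-- The free generator `g_i`. -/
def Gf (i : ℕ) : FA := FreeAlgebra.ι K (Sum.inl i)

/-- The free generator `t_j`. -/
def Tf (j : ℕ) : FA := FreeAlgebra.ι K (Sum.inr j)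

/-- The element `e_i = (1/d) ∑_{s=0}^{d-1} t_i^s t_{i+1}^{d-s}`. -/
def ef (d i : ℕ) : FA :=
  ((d : K)⁻¹) • ∑ s ∈ Finset.range d, Tf i ^ s * Tf (i + 1) ^ (d - s)

/-- The transposition `s_i = (i, i+1)` applied to `j`. -/
def swapIdx (i j : ℕ) : ℕ := if j = i then i + 1 else if j = i + 1 then i else j

/-- The defining relations of the Yokonuma–Hecke algebra `Y_{d,n}(u)`, together with junk
relations killing the generators with out-of-range indices (so that the quotient is presented
exactly by `g_1, …, g_{n-1}, t_1, …, t_n`). -/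
inductive YRel (d n : ℕ) : FA → FA → Prop
  | commute (i j : ℕ) (hi : 1 ≤ i) (hin : i + 1 ≤ n) (hj : 1 ≤ j) (hjn : j + 1 ≤ n)
      (hfar : i + 1 < j ∨ j + 1 < i) :
      YRel d n (Gf i * Gf j) (Gf j * Gf i)
  | braid (i : ℕ) (hi : 1 ≤ i) (hin : i + 2 ≤ n) :
      YRel d n (Gf i * Gf (i + 1) * Gf i) (Gf (i + 1) * Gf i * Gf (i + 1))
  | tcomm (i j : ℕ) (hi : 1 ≤ i) (hin : i ≤ n) (hj : 1 ≤ j) (hjn : j ≤ n) :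
      YRel d n (Tf i * Tf j) (Tf j * Tf i)
  | tg (i j : ℕ) (hi : 1 ≤ i) (hin : i + 1 ≤ n) (hj : 1 ≤ j) (hjn : j ≤ n) :
      YRel d n (Tf j * Gf i) (Gf i * Tf (swapIdx i j))
  | torder (j : ℕ) (hj : 1 ≤ j) (hjn : j ≤ n) :
      YRel d n (Tf j ^ d) 1
  | quad (i : ℕ) (hi : 1 ≤ i) (hin : i + 1 ≤ n) :
      YRel d n (Gf i ^ 2) (1 + (uu - 1) • ef d i + (uu - 1) • (ef d i * Gf i))
  | gjunk (i : ℕ) (h : i = 0 ∨ n ≤ i) : YRel d n (Gf i) 0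
  | tjunk (j : ℕ) (h : j = 0 ∨ n < j) : YRel d n (Tf j) 0

/-- The Yokonuma–Hecke algebra `Y_{d,n}(u)`. -/
abbrev YH (d n : ℕ) : Type := RingQuot (YRel d n)

/-- The generator `g_i` of `Y_{d,n}(u)`. -/
def yg (d n : ℕ) (i : ℕ) : YH d n := RingQuot.mkAlgHom K (YRel d n) (Gf i)

/-- The generator `t_j` of `Y_{d,n}(u)`. -/
def yt (d n : ℕ) (j : ℕ) : YH d n := RingQuot.mkAlgHom K (YRel d n) (Tf j)

/-- The idempotent `e_i ∈ Y_{d,n}(u)`. -/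
def ye (d n : ℕ) (i : ℕ) : YH d n := RingQuot.mkAlgHom K (YRel d n) (ef d i)

end

noncomputable section

/-- The element `G_{i,i+1} = g_i g_{i+1} g_i + g_i g_{i+1} + g_{i+1} g_i + g_i + g_{i+1} + 1`
of `Y_{d,n}(u)`. -/
def GG (d n : ℕ) (i : ℕ) : YH d n :=
  yg d n i * yg d n (i + 1) * yg d n i + yg d n i * yg d n (i + 1) +
    yg d n (i + 1) * yg d n i + yg d n i + yg d n (i + 1) + 1

/-- The element `w = g_1 g_2 ⋯ g_{n-1}` of `Y_{d,n}(u)`. -/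
def ww (d n : ℕ) : YH d n := ((List.range' 1 (n - 1)).map (yg d n)).prod

end

/-- If `a ^ d = b ^ d = 1`, the cyclic sum `∑ a ^ s * b ^ (d - s)` may be
started at `s = 1` instead of `s = 0`. -/
lemma sum_pow_mul_pow_shift {R : Type*} [Ring R] {d : ℕ} {a b : R}
    (ha : a ^ d = 1) (hb : b ^ d = 1) :
    ∑ s ∈ Finset.range d, a ^ (s + 1) * b ^ (d - (s + 1)) =
      ∑ s ∈ Finset.range d, a ^ s * b ^ (d - s) := by
  have h₁ := Finset.sum_range_succ (fun s => a ^ s * b ^ (d - s)) d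
  have h₂ := Finset.sum_range_succ' (fun s => a ^ s * b ^ (d - s)) d
  rw [h₁] at h₂
  simpa [ha, hb] using h₂.symm

lemma mul_sum_pow_mul_pow {R : Type*} [Ring R] {d : ℕ} {a b : R} (hab : Commute a b)
    (ha : a ^ d = 1) (hb : b ^ d = 1) :
    a * ∑ s ∈ Finset.range d, a ^ s * b ^ (d - s) =
      b * ∑ s ∈ Finset.range d, a ^ s * b ^ (d - s) := by
  conv_rhs => rw [← sum_pow_mul_pow_shift ha hb]
  rw [Finset.mul_sum, Finset.mul_sum]
  refine Finset.sum_congr rfl fun s hs => ?_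
  have hs' : d - s = d - (s + 1) + 1 := by have := Finset.mem_range.1 hs; omega
  rw [← mul_assoc, ← pow_succ', hs', pow_succ' b, ← mul_assoc, ← mul_assoc,
    (hab.pow_left (s + 1)).eq]

lemma sum_pow_mul_pow_mul_self {R : Type*} [Ring R] {d : ℕ} {a b : R} (hab : Commute a b)
    (ha : a ^ d = 1) (hb : b ^ d = 1) :
    (∑ s ∈ Finset.range d, a ^ s * b ^ (d - s)) * ∑ s ∈ Finset.range d, a ^ s * b ^ (d - s) =
      (d : R) * ∑ s ∈ Finset.range d, a ^ s * b ^ (d - s) := by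
  set E := ∑ s ∈ Finset.range d, a ^ s * b ^ (d - s) with hE
  have hpow : ∀ s, a ^ s * E = b ^ s * E := by
    intro s
    induction s with
    | zero => simp
    | succ s ih =>
      rw [pow_succ, mul_assoc, mul_sum_pow_mul_pow hab ha hb, ← mul_assoc,
        (hab.pow_left s).eq, mul_assoc, ih, ← mul_assoc, ← pow_succ']
  conv_lhs => rw [hE, Finset.sum_mul]
  rw [← hE]
  have hterm : ∀ s ∈ Finset.range d, a ^ s * b ^ (d - s) * E = E := by
    intro s hs
    rw [(hab.pow_pow s (d - s)).eq, mul_assoc, hpow, ← mul_assoc, ← pow_add,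
      Nat.sub_add_cancel (Finset.mem_range.1 hs).le, hb, one_mul]
  rw [Finset.sum_congr rfl hterm]
  simp

lemma commute_sum_pow_mul_pow {R : Type*} [Ring R] {d : ℕ} {a b g : R} (hab : Commute a b)
    (ha : a ^ d = 1) (hb : b ^ d = 1) (hag : a * g = g * b) (hbg : b * g = g * a) :
    Commute (∑ s ∈ Finset.range d, a ^ s * b ^ (d - s)) g := by
  have hag' (s : ℕ) : a ^ s * g = g * b ^ s :=
    (SemiconjBy.pow_right (x := b) (y := a) hag.symm s).symm
  have hbg' (s : ℕ) : b ^ s * g = g * a ^ s :=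
    (SemiconjBy.pow_right (x := a) (y := b) hbg.symm s).symm
  change _ * g = g * _
  conv_rhs => rw [← sum_pow_mul_pow_shift ha hb, ← Finset.sum_range_reflect]
  rw [Finset.sum_mul, Finset.mul_sum]
  refine Finset.sum_congr rfl fun s hs => ?_
  have hs' := Finset.mem_range.1 hs
  rw [mul_assoc, hbg', ← mul_assoc, hag', mul_assoc, ← (hab.pow_pow _ _).eq,
    show d - 1 - s + 1 = d - s by omega, show d - (d - s) = s by omega]

/-- An element satisfying a quadratic relation `g² = 1 + (q - 1) e + (q - 1) e g`, with `e` an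
idempotent commuting with `g`, is invertible. -/
lemma isUnit_of_sq_eq {F R : Type*} [Field F] [Ring R] [Algebra F R] {q : F} (hq : q ≠ 0)
    {e g : R} (he : e * e = e) (heg : Commute e g)
    (hg : g ^ 2 = 1 + (q - 1) • e + (q - 1) • (e * g)) : IsUnit g := by
  have hegg : e * (g * g) = q • e + (q - 1) • (e * g) := by
    rw [← pow_two, hg]
    simp only [mul_add, mul_one, mul_smul_comm, ← mul_assoc, he]
    module
  have hinv : g * (g + (q⁻¹ - 1) • e + (q⁻¹ - 1) • (e * g)) = 1 := by
    simp only [mul_add, mul_smul_comm, ← mul_assoc, ← heg.eq]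
    rw [mul_assoc e, hegg, ← pow_two, hg]
    simp only [smul_add, sub_smul, one_smul, smul_sub, inv_smul_smul₀ hq]
    abel
  have hcomm : Commute g (g + (q⁻¹ - 1) • e + (q⁻¹ - 1) • (e * g)) :=
    ((Commute.refl g).add_right (heg.symm.smul_right _)).add_right
      ((heg.symm.mul_right (Commute.refl g)).smul_right _)
  exact ⟨⟨g, _, hinv, hcomm.eq ▸ hinv⟩, rfl⟩

section Relations

variable {d n : ℕ}

lemma yg_commute {i j : ℕ} (hi : 1 ≤ i) (hin : i + 1 ≤ n) (hj : 1 ≤ j) (hjn : j + 1 ≤ n)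
    (hfar : i + 1 < j ∨ j + 1 < i) : Commute (yg d n i) (yg d n j) := by
  simpa [yg, Commute, SemiconjBy] using
    RingQuot.mkAlgHom_rel K (YRel.commute (d := d) i j hi hin hj hjn hfar)

lemma yg_braid {i : ℕ} (hi : 1 ≤ i) (hin : i + 2 ≤ n) :
    yg d n i * yg d n (i + 1) * yg d n i = yg d n (i + 1) * yg d n i * yg d n (i + 1) := by
  simpa [yg] using RingQuot.mkAlgHom_rel K (YRel.braid (d := d) i hi hin)

lemma yt_commute {i j : ℕ} (hi : 1 ≤ i) (hin : i ≤ n) (hj : 1 ≤ j) (hjn : j ≤ n) :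
    Commute (yt d n i) (yt d n j) := by
  simpa [yt, Commute, SemiconjBy] using
    RingQuot.mkAlgHom_rel K (YRel.tcomm (d := d) i j hi hin hj hjn)

lemma yt_mul_yg {i j : ℕ} (hi : 1 ≤ i) (hin : i + 1 ≤ n) (hj : 1 ≤ j) (hjn : j ≤ n) :
    yt d n j * yg d n i = yg d n i * yt d n (swapIdx i j) := by
  simpa [yt, yg] using RingQuot.mkAlgHom_rel K (YRel.tg (d := d) i j hi hin hj hjn)

lemma yt_pow {j : ℕ} (hj : 1 ≤ j) (hjn : j ≤ n) : yt d n j ^ d = 1 := by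
  simpa [yt] using RingQuot.mkAlgHom_rel K (YRel.torder (d := d) j hj hjn)

lemma yg_sq {i : ℕ} (hi : 1 ≤ i) (hin : i + 1 ≤ n) :
    yg d n i ^ 2 = 1 + (uu - 1) • ye d n i + (uu - 1) • (ye d n i * yg d n i) := by
  have h := RingQuot.mkAlgHom_rel K (YRel.quad (d := d) i hi hin)
  rwa [map_pow, map_add, map_add, map_one, map_smul, map_smul, map_mul] at h

lemma ye_eq (i : ℕ) : ye d n i =
    (d : K)⁻¹ • ∑ s ∈ Finset.range d, yt d n i ^ s * yt d n (i + 1) ^ (d - s) := by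
  rw [ye, ef, map_smul, map_sum]
  simp only [map_mul, map_pow, yt]

lemma ye_mul_self (hd : 1 ≤ d) {i : ℕ} (hi : 1 ≤ i) (hin : i + 1 ≤ n) :
    ye d n i * ye d n i = ye d n i := by
  have hd' : (d : K) ≠ 0 := Nat.cast_ne_zero.2 (by omega)
  rw [ye_eq, smul_mul_smul_comm,
    sum_pow_mul_pow_mul_self (yt_commute hi (by omega) (by omega) hin) (yt_pow hi (by omega))
      (yt_pow (by omega) hin), ← nsmul_eq_mul, ← Nat.cast_smul_eq_nsmul K, smul_smul,
    mul_assoc, inv_mul_cancel₀ hd', mul_one]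

lemma ye_commute_yg {i : ℕ} (hi : 1 ≤ i) (hin : i + 1 ≤ n) :
    Commute (ye d n i) (yg d n i) := by
  rw [ye_eq]
  refine Commute.smul_left (commute_sum_pow_mul_pow
    (yt_commute hi (by omega) (by omega) hin) (yt_pow hi (by omega))
    (yt_pow (by omega) hin) ?_ ?_) _
  · simpa [swapIdx] using yt_mul_yg (d := d) hi hin hi (by omega)
  · simpa [swapIdx] using yt_mul_yg (d := d) hi hin (j := i + 1) (by omega) hin

lemma isUnit_yg (hd : 1 ≤ d) {i : ℕ} (hi : 1 ≤ i) (hin : i + 1 ≤ n) : IsUnit (yg d n i) :=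
  isUnit_of_sq_eq (q := uu) RatFunc.X_ne_zero (ye_mul_self hd hi hin) (ye_commute_yg hi hin)
    (yg_sq hi hin)

lemma isUnit_ww (hd : 1 ≤ d) : IsUnit (ww d n) := by
  refine List.prod_isUnit fun x hx => ?_
  obtain ⟨i, hi, rfl⟩ := List.mem_map.1 hx
  rw [List.mem_range'_1] at hi
  exact isUnit_yg hd hi.1 (by omega)

/-- Conjugation by `w` shifts the braid generators. -/
lemma ww_semiconjBy_yg {i : ℕ} (hi : 1 ≤ i) (hin : i + 2 ≤ n) :
    SemiconjBy (ww d n) (yg d n i) (yg d n (i + 1)) := by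
  have hsplit : List.range' 1 (n - 1) =
      List.range' 1 (i - 1) ++ ([i, i + 1] ++ List.range' (i + 2) (n - 2 - i)) := by
    obtain ⟨k, rfl⟩ := Nat.exists_eq_add_of_le' hi
    obtain ⟨m, rfl⟩ := Nat.exists_eq_add_of_le hin
    have hm : k + 1 + 2 + m - 1 = k + (m + 2) := by omega
    have hm' : k + 1 + 2 + m - 2 - (k + 1) = m := by omega
    rw [hm, hm', ← List.range'_append_1, add_comm 1 k]
    simp [List.range'_succ]
  have hbraid : SemiconjBy (yg d n i * yg d n (i + 1)) (yg d n i) (yg d n (i + 1)) := by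
    rw [SemiconjBy, yg_braid hi hin, mul_assoc]
  have hleft : Commute ((List.range' 1 (i - 1)).map (yg d n)).prod (yg d n (i + 1)) := by
    refine Commute.list_prod_left _ _ fun x hx => ?_
    obtain ⟨j, hj, rfl⟩ := List.mem_map.1 hx
    rw [List.mem_range'_1] at hj
    exact yg_commute (by omega) (by omega) (by omega) (by omega) (by omega)
  have hright : Commute ((List.range' (i + 2) (n - 2 - i)).map (yg d n)).prod (yg d n i) := by
    refine Commute.list_prod_left _ _ fun x hx => ?_
    obtain ⟨j, hj, rfl⟩ := List.mem_map.1 hx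
    rw [List.mem_range'_1] at hj
    exact yg_commute (by omega) (by omega) (by omega) (by omega) (by omega)
  have hprod := SemiconjBy.mul_left hleft (SemiconjBy.mul_left hbraid hright)
  rw [ww, hsplit]
  simpa [mul_assoc] using hprod

lemma ww_semiconjBy_GG {i : ℕ} (hi : 1 ≤ i) (hin : i + 3 ≤ n) :
    SemiconjBy (ww d n) (GG d n i) (GG d n (i + 1)) := by
  have h₁ := ww_semiconjBy_yg (d := d) hi (show i + 2 ≤ n by omega)
  have h₂ := ww_semiconjBy_yg (d := d) (show 1 ≤ i + 1 by omega) (show i + 1 + 2 ≤ n by omega)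
  exact ((((((h₁.mul_right h₂).mul_right h₁).add_right (h₁.mul_right h₂)).add_right
    (h₂.mul_right h₁)).add_right h₁).add_right h₂).add_right (SemiconjBy.one_right _)

lemma ww_pow_semiconjBy_GG (k : ℕ) (hk : k + 3 ≤ n) :
    SemiconjBy (ww d n ^ k) (GG d n 1) (GG d n (k + 1)) := by
  induction k with
  | zero => simp
  | succ k ih =>
    rw [pow_succ']
    exact (ww_semiconjBy_GG (by omega) (by omega)).mul_left (ih (by omega))

end Relations

theorem stmt14 (d n : ℕ) (hd : 1 ≤ d) (hn : 3 ≤ n) :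
    ∃ w' : YH d n, ww d n * w' = 1 ∧ w' * ww d n = 1 ∧
      (∀ i, 1 ≤ i → i + 2 ≤ n →
        GG d n i = ww d n ^ (i - 1) * GG d n 1 * w' ^ (i - 1)) ∧
      TwoSidedIdeal.span {x : YH d n | ∃ i, 1 ≤ i ∧ i + 2 ≤ n ∧ x = GG d n i} =
        TwoSidedIdeal.span {GG d n 1} := by
  obtain ⟨w, hw⟩ := isUnit_ww (n := n) hd
  have hconj : ∀ i, 1 ≤ i → i + 2 ≤ n →
      GG d n i = ww d n ^ (i - 1) * GG d n 1 * (↑w⁻¹ : YH d n) ^ (i - 1) := by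
    intro i hi hin
    have h := ww_pow_semiconjBy_GG (d := d) (n := n) (i - 1) (by omega)
    rw [Nat.sub_add_cancel hi] at h
    rw [h.eq, mul_assoc, ← hw, ← Units.val_pow_eq_pow_val, ← Units.val_pow_eq_pow_val,
      inv_pow, Units.mul_inv, mul_one]
  refine ⟨↑w⁻¹, by rw [← hw, Units.mul_inv], by rw [← hw, Units.inv_mul], hconj,
    le_antisymm ?_ ?_⟩
  · rw [TwoSidedIdeal.span_le]
    rintro _ ⟨i, hi, hin, rfl⟩
    rw [hconj i hi hin]
    exact TwoSidedIdeal.mul_mem_right _ _ _ (TwoSidedIdeal.mul_mem_left _ _ _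
      (TwoSidedIdeal.subset_span (Set.mem_singleton _)))
  · refine TwoSidedIdeal.span_mono (Set.singleton_subset_iff.2 ?_)
    exact ⟨1, le_rfl, hn, rfl⟩
end

section
/- In the Yokonuma–Temperley–Lieb algebra YTL_{d,n}(u) (n≥3), the following relations hold: (1) (t_i−t_{i+2})(1+g_i) + (t_i−t_{i+1})(g_{i+1}+g_{i+1}g_i) = 0 for all 1≤i≤n−2; (2) (t_{i+2}−t_i)(1+g_{i+1}) + (t_{i+2}−t_{i+1})(g_i+g_i g_{i+1}) = 0 for all 1≤i≤n−2; (3) (t_{i+2}−t_{i+1})(t_{i+2}−t_i)(g_i+1) = 0 for all 1≤i≤n−2; (4) (t_{i−1}−t_{i+1})(t_{i−1}−t_i)(g_i+1) = 0 for all 2≤i≤n−1; (5) (t_i−t_{i+1})(t_{i+1}−t_{i+2})(t_i−t_{i+2}) = 0 for all 1≤i≤n−2. -/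
/-- The defining relations of the Yokonuma–Temperley–Lieb algebra `YTL_{d,n}(u)`: the relations
of `Y_{d,n}(u)` together with
`g_i g_{i+1} g_i + g_i g_{i+1} + g_{i+1} g_i + g_i + g_{i+1} + 1 = 0` for `1 ≤ i ≤ n-2`. -/
inductive YTLRel (d n : ℕ) : FA → FA → Prop
  | base {a b : FA} : YRel d n a b → YTLRel d n a b
  | tl (i : ℕ) (hi : 1 ≤ i) (hin : i + 2 ≤ n) :
      YTLRel d n
        (Gf i * Gf (i + 1) * Gf i + Gf i * Gf (i + 1) + Gf (i + 1) * Gf i +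
          Gf i + Gf (i + 1) + 1) 0

/-- The Yokonuma–Temperley–Lieb algebra `YTL_{d,n}(u)`, the quotient of `Y_{d,n}(u)` by the
two-sided ideal generated by the elements
`g_i g_{i+1} g_i + g_i g_{i+1} + g_{i+1} g_i + g_i + g_{i+1} + 1`, `1 ≤ i ≤ n-2`. -/
abbrev YTL (d n : ℕ) : Type := RingQuot (YTLRel d n)

/-- The image of the generator `g_i` in `YTL_{d,n}(u)`. -/
noncomputable def zg (d n : ℕ) (i : ℕ) : YTL d n :=
  RingQuot.mkAlgHom K (YTLRel d n) (Gf i)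

/-- The image of the generator `t_j` in `YTL_{d,n}(u)`. -/
noncomputable def zt (d n : ℕ) (j : ℕ) : YTL d n :=
  RingQuot.mkAlgHom K (YTLRel d n) (Tf j)

/-- Two adjacent braid generators `a, b` acting on three commuting elements `x, y, z` by the
transpositions `(x y)` and `(y z)`, and satisfying the Temperley–Lieb relation. -/
structure IsFramedTLTriple {A : Type*} [Ring A] (a b x y z : A) : Prop where
  xa : x * a = a * y
  ya : y * a = a * x
  za : z * a = a * z
  xb : x * b = b * x
  yb : y * b = b * z
  zb : z * b = b * y
  xy : y * x = x * y
  xz : z * x = x * z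
  yz : z * y = y * z
  tl : a * b * a + a * b + b * a + a + b + 1 = 0

namespace IsFramedTLTriple

variable {A : Type*} [Ring A] {a b x y z : A}

theorem mul_left_of_mul_eq {p q r s : A} (h : p * q = r * s) (w : A) :
    p * (q * w) = r * (s * w) := by
  rw [← mul_assoc, h, mul_assoc]

/-- Comparing left multiplication by `x` with right multiplication by `z`. -/
theorem outer_sub_left (h : IsFramedTLTriple a b x y z) :
    (x - z) * (1 + a) + (x - y) * (b + b * a) = 0 := by
  have key := congrArg (fun w => x * w - w * z) h.tl
  simp only [mul_zero, zero_mul, sub_zero] at key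
  rw [← key]
  simp only [mul_add, add_mul, sub_mul, mul_one, one_mul, mul_assoc, h.xa, h.za, h.xb, h.yb,
    mul_left_of_mul_eq h.xa, mul_left_of_mul_eq h.xb, mul_left_of_mul_eq h.yb]
  abel

/-- Comparing left multiplication by `z` with right multiplication by `x`. -/
theorem outer_sub_right (h : IsFramedTLTriple a b x y z) :
    (z - x) * (1 + b) + (z - y) * (a + a * b) = 0 := by
  have key := congrArg (fun w => z * w - w * x) h.tl
  simp only [mul_zero, zero_mul, sub_zero] at key
  rw [← key]
  simp only [mul_add, add_mul, sub_mul, mul_one, one_mul, mul_assoc, h.ya, h.za, h.xb, h.zb,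
    mul_left_of_mul_eq h.ya, mul_left_of_mul_eq h.za, mul_left_of_mul_eq h.zb]
  abel

/-- The generator `a` acts by `-1` where `z` differs from `x` and `y`. -/
theorem mul_add_one_left (h : IsFramedTLTriple a b x y z) :
    (z - y) * (z - x) * (a + 1) = 0 := by
  have key := congrArg (fun w => y * w - w * z) h.outer_sub_left
  simp only [mul_zero, zero_mul, sub_zero] at key
  rw [← key]
  simp only [mul_add, add_mul, mul_sub, sub_mul, mul_one, mul_assoc, h.xa, h.ya, h.za, h.xb,
    h.yb, h.xy, h.xz, h.yz, mul_left_of_mul_eq h.xa, mul_left_of_mul_eq h.ya,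
    mul_left_of_mul_eq h.za, mul_left_of_mul_eq h.xb, mul_left_of_mul_eq h.yb]
  abel

/-- The generator `b` acts by `-1` where `x` differs from `y` and `z`. -/
theorem mul_add_one_right (h : IsFramedTLTriple a b x y z) :
    (x - z) * (x - y) * (b + 1) = 0 := by
  have key := congrArg (fun w => y * w - w * x) h.outer_sub_right
  simp only [mul_zero, zero_mul, sub_zero] at key
  rw [← key]
  simp only [mul_add, add_mul, mul_sub, sub_mul, mul_one, mul_assoc, h.ya, h.za, h.xb, h.yb,
    h.zb, h.xy, h.xz, h.yz, mul_left_of_mul_eq h.ya, mul_left_of_mul_eq h.za,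
    mul_left_of_mul_eq h.xb, mul_left_of_mul_eq h.yb]
  abel

/-- No three framings are pairwise distinct. -/
theorem vandermonde (h : IsFramedTLTriple a b x y z) :
    (x - y) * (y - z) * (x - z) = 0 := by
  have key := congrArg (fun w => w * x - y * w) h.mul_add_one_left
  simp only [mul_zero, zero_mul, sub_zero] at key
  rw [← key]
  simp only [mul_add, add_mul, mul_sub, sub_mul, mul_one, mul_assoc, h.ya, h.za, h.xy, h.xz,
    mul_left_of_mul_eq h.xa, mul_left_of_mul_eq h.ya, mul_left_of_mul_eq h.za,
    mul_left_of_mul_eq h.xy, mul_left_of_mul_eq h.xz]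
  abel

end IsFramedTLTriple

theorem zt_mul_zg (d n i j k : ℕ) (hi : 1 ≤ i) (hin : i + 1 ≤ n) (hj : 1 ≤ j) (hjn : j ≤ n)
    (hk : swapIdx i j = k) : zt d n j * zg d n i = zg d n i * zt d n k := by
  subst hk
  simpa only [zg, zt, map_mul] using
    RingQuot.mkAlgHom_rel K (YTLRel.base (YRel.tg (d := d) i j hi hin hj hjn))

theorem zt_mul_zt (d n i j : ℕ) (hi : 1 ≤ i) (hin : i ≤ n) (hj : 1 ≤ j) (hjn : j ≤ n) :
    zt d n i * zt d n j = zt d n j * zt d n i := by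
  simpa only [zt, map_mul] using
    RingQuot.mkAlgHom_rel K (YTLRel.base (YRel.tcomm (d := d) i j hi hin hj hjn))

theorem isFramedTLTriple (d n i : ℕ) (hi : 1 ≤ i) (hin : i + 2 ≤ n) :
    IsFramedTLTriple (zg d n i) (zg d n (i + 1))
      (zt d n i) (zt d n (i + 1)) (zt d n (i + 2)) where
  xa := zt_mul_zg d n _ _ _ (by lia) (by lia) (by lia) (by lia) (by grind [swapIdx])
  ya := zt_mul_zg d n _ _ _ (by lia) (by lia) (by lia) (by lia) (by grind [swapIdx])
  za := zt_mul_zg d n _ _ _ (by lia) (by lia) (by lia) (by lia) (by grind [swapIdx])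
  xb := zt_mul_zg d n _ _ _ (by lia) (by lia) (by lia) (by lia) (by grind [swapIdx])
  yb := zt_mul_zg d n _ _ _ (by lia) (by lia) (by lia) (by lia) (by grind [swapIdx])
  zb := zt_mul_zg d n _ _ _ (by lia) (by lia) (by lia) (by lia) (by grind [swapIdx])
  xy := zt_mul_zt d n _ _ (by lia) (by lia) (by lia) (by lia)
  xz := zt_mul_zt d n _ _ (by lia) (by lia) (by lia) (by lia)
  yz := zt_mul_zt d n _ _ (by lia) (by lia) (by lia) (by lia)
  tl := by
    simpa only [zg, map_add, map_mul, map_one, map_zero] using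
      RingQuot.mkAlgHom_rel K (YTLRel.tl (d := d) i hi hin)

theorem stmt15 (d n : ℕ) (hd : 1 ≤ d) (hn : 3 ≤ n) :
    (∀ i, 1 ≤ i → i + 2 ≤ n →
      (zt d n i - zt d n (i + 2)) * (1 + zg d n i) +
        (zt d n i - zt d n (i + 1)) * (zg d n (i + 1) + zg d n (i + 1) * zg d n i) = 0) ∧
    (∀ i, 1 ≤ i → i + 2 ≤ n →
      (zt d n (i + 2) - zt d n i) * (1 + zg d n (i + 1)) +
        (zt d n (i + 2) - zt d n (i + 1)) * (zg d n i + zg d n i * zg d n (i + 1)) = 0) ∧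
    (∀ i, 1 ≤ i → i + 2 ≤ n →
      (zt d n (i + 2) - zt d n (i + 1)) * (zt d n (i + 2) - zt d n i) * (zg d n i + 1) = 0) ∧
    (∀ i, 2 ≤ i → i + 1 ≤ n →
      (zt d n (i - 1) - zt d n (i + 1)) * (zt d n (i - 1) - zt d n i) * (zg d n i + 1) = 0) ∧
    (∀ i, 1 ≤ i → i + 2 ≤ n →
      (zt d n i - zt d n (i + 1)) * (zt d n (i + 1) - zt d n (i + 2)) *
        (zt d n i - zt d n (i + 2)) = 0) := by
  refine ⟨fun i hi hin => (isFramedTLTriple d n i hi hin).outer_sub_left,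
    fun i hi hin => (isFramedTLTriple d n i hi hin).outer_sub_right,
    fun i hi hin => (isFramedTLTriple d n i hi hin).mul_add_one_left,
    fun i hi hin => ?_,
    fun i hi hin => (isFramedTLTriple d n i hi hin).vandermonde⟩
  obtain ⟨j, rfl⟩ := Nat.exists_eq_add_of_le' (show 1 ≤ i by lia)
  exact (isFramedTLTriple d n j (by lia) hin).mul_add_one_right
end
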